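/- (Averaged two-copy Choi state for unistochastic channels.) Let d ≥ 2 and consider the unitary group U(Fin d × Fin d) with its Haar probability measure (environment dimension equal to d, initialized in the maximally mixed state). Then for all a₁, a₂, b₁, b₂, i₁, i₂, j₁, j₂ ∈ Fin d, (1/d⁴) Σ_{l₁, l₂, o₁, o₂ ∈ Fin d} ∫_{U(Fin d × Fin d)} U_{(i₁,l₁),(a₁,o₁)} U_{(i₂,l₂),(a₂,o₂)} conj(U_{(j₁,l₁),(b₁,o₁)}) conj(U_{(j₂,l₂),(b₂,o₂)}) dHaar(U) = (1/(d⁴ − 1)) · [ δ_{a₁b₁}δ_{a₂b₂}δ_{i₁j₁}δ_{i₂j₂} + (1/d²) δ_{a₁b₂}δ_{a₂b₁}δ_{i₁j₂}δ_{i₂j₁} − (1/d³)( δ_{a₁b₂}δ_{a₂b₁}δ_{i₁j₁}δ_{i₂j₂} + δ_{a₁b₁}δ_{a₂b₂}δ_{i₁j₂}δ_{i₂j₁} ) ]. -/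

import Mathlib

open MeasureTheory Matrix

noncomputable instance Matrix.measurableSpace {m n R : Type*} [MeasurableSpace R] :
    MeasurableSpace (Matrix m n R) := inferInstanceAs (MeasurableSpace (m → n → R))

instance Matrix.borelSpace {m n R : Type*} [Countable m] [Countable n]
    [TopologicalSpace R] [MeasurableSpace R] [BorelSpace R] [SecondCountableTopology R] :
    BorelSpace (Matrix m n R) := inferInstanceAs (BorelSpace (m → n → R))

instance {ι : Type*} [Fintype ι] [DecidableEq ι] :
    BorelSpace (Matrix.unitaryGroup ι ℂ) := Subtype.borelSpace _

/-- Kronecker delta with values in `ℂ`. -/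
noncomputable def δ {α : Type*} [DecidableEq α] (x y : α) : ℂ := if x = y then 1 else 0

/-!
By left invariance, the twirl `T(A) = ∫ (U ⊗ U) A (U ⊗ U)ᴴ` commutes with every `V ⊗ V`.
Differentiating along one-parameter unitary groups and complexifying, it commutes with
`X ⊗ 1 + 1 ⊗ X` for every matrix `X`, hence with all `X ⊗ Y + Y ⊗ X`. Testing this on matrix units
forces `T(A) = α + β F` with `F` the flip, and pairing with `1` and `F` under the trace determines
`α` and `β`. For `A` a matrix unit, the entries of `T(A)` are the fourth-moment integrals, and
contracting the environment indices of the resulting deltas gives the Choi matrix.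
-/

namespace UnitaryTwirl

open NormedSpace
open scoped Kronecker

section KroneckerDelta

variable {α β : Type*} [DecidableEq α] [DecidableEq β]

lemma δ_self (x : α) : δ x x = 1 := if_pos rfl

lemma δ_comm (x y : α) : δ x y = δ y x := by simp only [δ, eq_comm]

lemma δ_prod (x z : α) (y w : β) : δ (x, y) (z, w) = δ x z * δ y w := by
  simp only [δ, Prod.mk.injEq, ite_and, mul_ite, mul_one, mul_zero]
  split_ifs <;> rfl

lemma δ_mul_δ_swap (x y : α) : δ x y * δ y x = δ x y := by simp [δ, eq_comm]

lemma sum_sum_δ [Fintype α] : ∑ x : α, ∑ y, δ x y = Fintype.card α := by simp [δ]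

lemma one_apply_eq_δ (x y : α) : (1 : Matrix α α ℂ) x y = δ x y := one_apply

end KroneckerDelta

section Commutant

variable {n R : Type*} [DecidableEq n]

variable (n R) in
/-- The flip `x ⊗ y ↦ y ⊗ x`, as a matrix on the doubled index set. -/
def swapMatrix [Zero R] [One R] : Matrix (n × n) (n × n) R :=
  Equiv.Perm.permMatrix R (Equiv.prodComm n n)

lemma swapMatrix_apply [Zero R] [One R] (p q : n × n) :
    swapMatrix n R p q = if p = q.swap then 1 else 0 := by
  simp [swapMatrix, Prod.swap_eq_iff_eq_swap]

lemma swapMatrix_apply_eq_δ (i j k l : n) : swapMatrix n ℂ (i, j) (k, l) = δ i l * δ j k := by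
  rw [swapMatrix_apply, ← δ_prod]
  rfl

section Fintype

variable [Fintype n]

lemma swapMatrix_mul_self [NonAssocSemiring R] : swapMatrix n R * swapMatrix n R = 1 := by
  have involutive : (Equiv.prodComm n n : Equiv.Perm (n × n)) * Equiv.prodComm n n = 1 := rfl
  rw [swapMatrix, ← permMatrix_mul, involutive, permMatrix_one]

lemma trace_mul_swapMatrix [NonAssocSemiring R] (A : Matrix (n × n) (n × n) R) :
    (A * swapMatrix n R).trace = ∑ i, ∑ j, A (i, j) (j, i) := by
  simp [trace, swapMatrix, PEquiv.mul_toMatrix_toPEquiv, Fintype.sum_prod_type]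

lemma trace_swapMatrix [NonAssocSemiring R] : (swapMatrix n R).trace = Fintype.card n := by
  rw [← one_mul (swapMatrix n R), trace_mul_swapMatrix]
  have diagonal (i j : n) : (i = j ∧ j = i) ↔ i = j := and_iff_left_of_imp Eq.symm
  simp only [one_apply, Prod.mk.injEq, diagonal, Finset.sum_ite_eq, Finset.mem_univ, if_true,
    Finset.sum_const, Finset.card_univ, nsmul_one]

lemma commute_kronecker_self_swapMatrix [CommSemiring R] (A : Matrix n n R) :
    Commute (A ⊗ₖ A) (swapMatrix n R) := by
  ext ⟨i, j⟩ ⟨k, l⟩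
  simp [swapMatrix, PEquiv.mul_toMatrix_toPEquiv, PEquiv.toMatrix_toPEquiv_mul, mul_comm]

end Fintype

/-- The generator `X ↦ X ⊗ 1 + 1 ⊗ X` of the one-parameter families `exp (t X) ⊗ exp (t X)`. -/
def kroneckerSum [CommSemiring R] : Matrix n n R →ₗ[R] Matrix (n × n) (n × n) R where
  toFun X := X ⊗ₖ 1 + 1 ⊗ₖ X
  map_add' X Y := by simp only [add_kronecker, kronecker_add]; abel
  map_smul' c X := by simp only [smul_kronecker, kronecker_smul, smul_add, RingHom.id_apply]

lemma kroneckerSum_apply [CommSemiring R] (X : Matrix n n R) :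
    kroneckerSum X = X ⊗ₖ 1 + 1 ⊗ₖ X := rfl

variable [Fintype n]

lemma kroneckerSum_mul_kroneckerSum [CommSemiring R] (X Y : Matrix n n R) :
    kroneckerSum X * kroneckerSum Y = kroneckerSum (X * Y) + (X ⊗ₖ Y + Y ⊗ₖ X) := by
  simp only [kroneckerSum_apply, add_mul, mul_add, ← mul_kronecker_mul, one_mul, mul_one]
  abel

lemma commute_kronecker_add_kronecker [CommRing R] {M : Matrix (n × n) (n × n) R}
    (hM : ∀ X, Commute (kroneckerSum X) M) (X Y : Matrix n n R) :
    Commute (X ⊗ₖ Y + Y ⊗ₖ X) M := by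
  rw [← sub_eq_of_eq_add' (kroneckerSum_mul_kroneckerSum X Y)]
  exact ((hM X).mul_left (hM Y)).sub_left (hM _)

theorem exists_eq_smul_one_add_smul_swapMatrix [CommRing R] [Nontrivial n]
    {M : Matrix (n × n) (n × n) R} (hM : ∀ X, Commute (kroneckerSum X) M) :
    ∃ α β : R, M = α • 1 + β • swapMatrix n R := by
  -- As `a ≠ b`, `E_ia ⊗ E_jb + E_jb ⊗ E_ia` sends `e_a ⊗ e_b` to `e_i ⊗ e_j`, so commuting with it
  -- expresses the `(i, j)` column of `M` through the `(a, b)` column.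
  obtain ⟨a, b, hab⟩ := exists_pair_ne n
  refine ⟨M (a, b) (a, b), M (b, a) (a, b), ?_⟩
  ext p ⟨i, j⟩
  have entry := congrFun₂
    (commute_kronecker_add_kronecker hM (single i a 1) (single j b 1)).eq p (a, b)
  simp only [single_kronecker_single, add_mul, mul_add] at entry
  have entry' : M p (i, j) = (if p = (i, j) then M (a, b) (a, b) else 0) +
      (if p = (j, i) then M (b, a) (a, b) else 0) := by
    simpa [mul_apply, single_apply, hab, ite_and, eq_comm] using entry
  simpa [one_apply, swapMatrix_apply] using entry'

end Commutant

section InfinitesimalUnitary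

open scoped Matrix.Norms.L2Operator

variable {n : Type*} [Fintype n] [DecidableEq n]

lemma hasDerivAt_exp_smul_kronecker_self (X : Matrix n n ℂ) :
    HasDerivAt (fun t : ℝ ↦ exp (t • X) ⊗ₖ exp (t • X)) (kroneckerSum X) 0 := by
  have hexp : HasDerivAt (fun t : ℝ ↦ exp (t • X)) X 0 := by
    simpa using hasDerivAt_exp_smul_const X (0 : ℝ)
  let kronecker : Matrix n n ℂ →ₗ[ℝ] Matrix n n ℂ →ₗ[ℝ] Matrix (n × n) (n × n) ℂ :=
    kroneckerBilinear
  refine (kronecker.toContinuousBilinearMap.hasDerivAt_of_bilinear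
    (fun _ ↦ hexp) (fun _ ↦ hexp)).congr_deriv ?_
  rw [zero_smul, exp_zero, add_comm]
  rfl

lemma commute_of_hasDerivAt {A : Type*} [NormedRing A] [NormedAlgebra ℝ A] {f : ℝ → A} {f' a : A}
    {t : ℝ} (hf : HasDerivAt f f' t) (ha : ∀ s, Commute (f s) a) : Commute f' a :=
  (hf.mul_const a).unique (by simpa only [(ha _).eq] using hf.const_mul a)

lemma commute_kroneckerSum_of_forall_unitary {M : Matrix (n × n) (n × n) ℂ}
    (hM : ∀ V ∈ unitaryGroup n ℂ, Commute (V ⊗ₖ V) M) (X : Matrix n n ℂ) :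
    Commute (kroneckerSum X) M := by
  have selfAdjoint_case (H : selfAdjoint (Matrix n n ℂ)) : Commute (kroneckerSum H.1) M := by
    have hI : Commute (kroneckerSum (Complex.I • H.1)) M := by
      refine commute_of_hasDerivAt (hasDerivAt_exp_smul_kronecker_self _) fun t ↦ ?_
      simpa [smul_comm t Complex.I] using hM _ (selfAdjoint.expUnitary (t • H)).2
    simpa [smul_smul] using hI.smul_left (-Complex.I)
  rw [← realPart_add_I_smul_imaginaryPart X, map_add, map_smul]
  exact (selfAdjoint_case _).add_left ((selfAdjoint_case _).smul_left _)

end InfinitesimalUnitary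

section Twirl

open scoped Matrix.Norms.L2Operator

variable {n : Type*} [Fintype n] [DecidableEq n]

lemma star_kronecker_self_mul_kronecker_self (U : unitaryGroup n ℂ) :
    star (U.1 ⊗ₖ U.1) * (U.1 ⊗ₖ U.1) = 1 :=
  Unitary.star_mul_self_of_mem (kronecker_mem_unitary U.2 U.2)

variable (μ : Measure (unitaryGroup n ℂ))

/-- The twofold twirl of `A`, i.e. the `μ`-average of `(U ⊗ U) A (U ⊗ U)ᴴ`, as a Bochner
integral of matrices with the L² operator norm. -/
noncomputable def twirl (A : Matrix (n × n) (n × n) ℂ) : Matrix (n × n) (n × n) ℂ :=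
  ∫ U : unitaryGroup n ℂ, (U.1 ⊗ₖ U.1) * A * star (U.1 ⊗ₖ U.1) ∂μ

section IsFiniteMeasure

variable [IsFiniteMeasure μ]

lemma integrable_conj_kronecker_self (A : Matrix (n × n) (n × n) ℂ) :
    Integrable (fun U : unitaryGroup n ℂ ↦ (U.1 ⊗ₖ U.1) * A * star (U.1 ⊗ₖ U.1)) μ := by
  have hentry (i j : n) : Continuous fun U : unitaryGroup n ℂ ↦ U.1 i j :=
    continuous_subtype_val.matrix_elem i j
  have hkron : Continuous fun U : unitaryGroup n ℂ ↦ U.1 ⊗ₖ U.1 :=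
    continuous_matrix fun p q ↦ (hentry p.1 q.1).mul (hentry p.2 q.2)
  refine Integrable.of_bound (C := ‖A‖)
    ((hkron.mul continuous_const).mul hkron.star).aestronglyMeasurable (.of_forall fun U ↦ ?_)
  have hU := kronecker_mem_unitary U.2 U.2
  rw [CStarRing.norm_mul_mem_unitary _ (Unitary.star_mem hU), CStarRing.norm_mem_unitary_mul _ hU]

lemma map_twirl (L : Matrix (n × n) (n × n) ℂ →ₗ[ℂ] ℂ) (A : Matrix (n × n) (n × n) ℂ) :
    L (twirl μ A) = ∫ U : unitaryGroup n ℂ, L ((U.1 ⊗ₖ U.1) * A * star (U.1 ⊗ₖ U.1)) ∂μ :=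
  (L.toContinuousLinearMap.integral_comp_comm (integrable_conj_kronecker_self μ A)).symm

lemma commute_kronecker_self_twirl [μ.IsMulLeftInvariant] (A : Matrix (n × n) (n × n) ℂ)
    (V : unitaryGroup n ℂ) : Commute (V.1 ⊗ₖ V.1) (twirl μ A) := by
  have conj_twirl : (V.1 ⊗ₖ V.1) * twirl μ A * star (V.1 ⊗ₖ V.1) = twirl μ A := calc
    _ = ∫ U : unitaryGroup n ℂ,
          (V.1 ⊗ₖ V.1) * ((U.1 ⊗ₖ U.1) * A * star (U.1 ⊗ₖ U.1)) * star (V.1 ⊗ₖ V.1) ∂μ := by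
      have hint := integrable_conj_kronecker_self μ A
      rw [integral_mul_const_of_integrable (hint.const_mul _),
        integral_const_mul_of_integrable hint, twirl]
    _ = ∫ U : unitaryGroup n ℂ,
          ((V * U).1 ⊗ₖ (V * U).1) * A * star ((V * U).1 ⊗ₖ (V * U).1) ∂μ := by
      simp only [Submonoid.coe_mul, mul_kronecker_mul, star_mul, Matrix.mul_assoc]
    _ = twirl μ A := integral_mul_left_eq_self
      (fun U : unitaryGroup n ℂ ↦ (U.1 ⊗ₖ U.1) * A * star (U.1 ⊗ₖ U.1)) V
  rw [Commute, SemiconjBy]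
  nth_rw 2 [← conj_twirl]
  rw [mul_assoc, star_kronecker_self_mul_kronecker_self, mul_one]

end IsFiniteMeasure

variable [IsProbabilityMeasure μ]

lemma trace_mul_twirl {B : Matrix (n × n) (n × n) ℂ}
    (hB : ∀ U : unitaryGroup n ℂ, Commute (U.1 ⊗ₖ U.1) B) (A : Matrix (n × n) (n × n) ℂ) :
    (B * twirl μ A).trace = (B * A).trace := by
  have integrand (U : unitaryGroup n ℂ) :
      (B * ((U.1 ⊗ₖ U.1) * A * star (U.1 ⊗ₖ U.1))).trace = (B * A).trace := by
    rw [← mul_assoc, trace_mul_comm, ← mul_assoc B, ← (hB U).eq, mul_assoc, ← mul_assoc,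
      star_kronecker_self_mul_kronecker_self, one_mul]
  calc (B * twirl μ A).trace
      = ∫ U : unitaryGroup n ℂ, (B * ((U.1 ⊗ₖ U.1) * A * star (U.1 ⊗ₖ U.1))).trace ∂μ :=
        map_twirl μ (traceLinearMap _ ℂ ℂ ∘ₗ LinearMap.mulLeft ℂ B) A
    _ = (B * A).trace := by simp only [integrand, integral_const, probReal_univ, one_smul]

theorem twirl_eq [Nontrivial n] [μ.IsMulLeftInvariant] (A : Matrix (n × n) (n × n) ℂ) :
    twirl μ A = ((Fintype.card n : ℂ) ^ 2 - 1)⁻¹ •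
      ((A.trace - (Fintype.card n : ℂ)⁻¹ * (A * swapMatrix n ℂ).trace) • 1 +
        ((A * swapMatrix n ℂ).trace - (Fintype.card n : ℂ)⁻¹ * A.trace) • swapMatrix n ℂ) := by
  obtain ⟨α, β, htwirl⟩ := exists_eq_smul_one_add_smul_swapMatrix
    (commute_kroneckerSum_of_forall_unitary fun V hV ↦ commute_kronecker_self_twirl μ A ⟨V, hV⟩)
  set N := (Fintype.card n : ℂ) with hN
  have trace_eq : A.trace = α * N ^ 2 + β * N := by
    have := trace_mul_twirl μ (fun U ↦ Commute.one_right _) A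
    simpa [htwirl, trace_swapMatrix, ← hN, sq] using this.symm
  have trace_swap_eq : (A * swapMatrix n ℂ).trace = α * N + β * N ^ 2 := by
    have := trace_mul_twirl μ (fun U ↦ commute_kronecker_self_swapMatrix U.1) A
    rw [trace_mul_comm, ← this]
    simp [htwirl, mul_add, swapMatrix_mul_self, trace_swapMatrix, ← hN, sq]
  have card_ne_zero : N ≠ 0 := Nat.cast_ne_zero.2 Fintype.card_ne_zero
  have card_sq_sub_one_ne_zero : N ^ 2 - 1 ≠ 0 := by
    rw [sub_ne_zero, hN]
    exact_mod_cast (Nat.one_lt_pow two_ne_zero (Fintype.one_lt_card (α := n))).ne'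
  rw [htwirl, trace_eq, trace_swap_eq, smul_add, smul_smul, smul_smul]
  congr 2 <;> field_simp <;> ring

theorem integral_unitary_mul_mul_conj_mul_conj [Nontrivial n] [μ.IsMulLeftInvariant]
    (i₁ i₂ a₁ a₂ j₁ j₂ b₁ b₂ : n) :
    ∫ U : unitaryGroup n ℂ, U i₁ a₁ * U i₂ a₂ * (starRingEnd ℂ) (U j₁ b₁) *
        (starRingEnd ℂ) (U j₂ b₂) ∂μ =
      ((Fintype.card n : ℂ) ^ 2 - 1)⁻¹ *
        (δ a₁ b₁ * δ a₂ b₂ * (δ i₁ j₁ * δ i₂ j₂) + δ a₁ b₂ * δ a₂ b₁ * (δ i₁ j₂ * δ i₂ j₁) -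
          (Fintype.card n : ℂ)⁻¹ *
            (δ a₁ b₂ * δ a₂ b₁ * (δ i₁ j₁ * δ i₂ j₂) +
              δ a₁ b₁ * δ a₂ b₂ * (δ i₁ j₂ * δ i₂ j₁))) := by
  have entry (U : unitaryGroup n ℂ) :
      ((U.1 ⊗ₖ U.1) * single (a₁, a₂) (b₁, b₂) 1 * star (U.1 ⊗ₖ U.1) :
          Matrix (n × n) (n × n) ℂ) (i₁, i₂) (j₁, j₂) =
        U i₁ a₁ * U i₂ a₂ * (starRingEnd ℂ) (U j₁ b₁) * (starRingEnd ℂ) (U j₂ b₂) := by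
    simp [mul_apply, single_apply, ite_and, mul_assoc]
  have trace_single : (single (a₁, a₂) (b₁, b₂) (1 : ℂ)).trace = δ a₁ b₁ * δ a₂ b₂ := by
    rw [← δ_prod]
    simp [trace, single_apply, ite_and, δ, eq_comm]
  have trace_single_swap :
      (single (a₁, a₂) (b₁, b₂) 1 * swapMatrix n ℂ).trace = δ a₁ b₂ * δ a₂ b₁ := by
    rw [trace_single_mul, swapMatrix_apply_eq_δ, one_smul, δ_comm b₁, δ_comm b₂, mul_comm]
  have apply_twirl := map_twirl μ (entryLinearMap ℂ ℂ (i₁, i₂) (j₁, j₂))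
    (single (a₁, a₂) (b₁, b₂) 1)
  simp only [entryLinearMap_apply, entry, twirl_eq, trace_single, trace_single_swap] at apply_twirl
  rw [← apply_twirl]
  simp only [Matrix.add_apply, Matrix.smul_apply, smul_eq_mul, one_apply_eq_δ, δ_prod,
    swapMatrix_apply_eq_δ]
  ring

end Twirl

end UnitaryTwirl

open UnitaryTwirl

theorem averaged_unistochastic_choi_t_two_general {S E : Type*} [Fintype S] [DecidableEq S]
    [Fintype E] [DecidableEq E] [Nontrivial (S × E)] (μ : Measure (unitaryGroup (S × E) ℂ))
    [μ.IsMulLeftInvariant] [IsProbabilityMeasure μ] (a₁ a₂ b₁ b₂ i₁ i₂ j₁ j₂ : S) :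
    (1 / ((Fintype.card S : ℂ) ^ 2 * (Fintype.card E : ℂ) ^ 2)) *
        ∑ l₁ : E, ∑ l₂ : E, ∑ o₁ : E, ∑ o₂ : E, ∫ U : unitaryGroup (S × E) ℂ,
          U (i₁, l₁) (a₁, o₁) * U (i₂, l₂) (a₂, o₂) *
            (starRingEnd ℂ) (U (j₁, l₁) (b₁, o₁)) *
            (starRingEnd ℂ) (U (j₂, l₂) (b₂, o₂)) ∂μ =
      (1 / (((Fintype.card S : ℂ) * Fintype.card E) ^ 2 - 1)) *
        (((Fintype.card E : ℂ) / Fintype.card S) ^ 2 * (δ a₁ b₁ * δ a₂ b₂ * δ i₁ j₁ * δ i₂ j₂) +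
          (1 / (Fintype.card S : ℂ) ^ 2) * (δ a₁ b₂ * δ a₂ b₁ * δ i₁ j₂ * δ i₂ j₁) -
          (1 / (Fintype.card S : ℂ) ^ 3) *
            (δ a₁ b₂ * δ a₂ b₁ * δ i₁ j₁ * δ i₂ j₂ +
              δ a₁ b₁ * δ a₂ b₂ * δ i₁ j₂ * δ i₂ j₁)) := by
  have : Nonempty (S × E) := inferInstance
  have card_S_ne_zero : (Fintype.card S : ℂ) ≠ 0 :=
    Nat.cast_ne_zero.2 (Fintype.card_pos_iff.2 ⟨a₁⟩).ne'
  have card_E_ne_zero : (Fintype.card E : ℂ) ≠ 0 :=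
    Nat.cast_ne_zero.2 (Fintype.card_pos_iff.2 (nonempty_prod.1 this).2).ne'
  have summand (l₁ l₂ o₁ o₂ : E) : ∫ U : unitaryGroup (S × E) ℂ,
        U (i₁, l₁) (a₁, o₁) * U (i₂, l₂) (a₂, o₂) * (starRingEnd ℂ) (U (j₁, l₁) (b₁, o₁)) *
          (starRingEnd ℂ) (U (j₂, l₂) (b₂, o₂)) ∂μ =
      (((Fintype.card S : ℂ) * Fintype.card E) ^ 2 - 1)⁻¹ *
        (δ a₁ b₁ * δ a₂ b₂ * δ i₁ j₁ * δ i₂ j₂ +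
          δ a₁ b₂ * δ a₂ b₁ * δ i₁ j₂ * δ i₂ j₁ * δ l₁ l₂ * δ o₁ o₂ -
          ((Fintype.card S : ℂ) * Fintype.card E)⁻¹ *
            (δ a₁ b₂ * δ a₂ b₁ * δ i₁ j₁ * δ i₂ j₂ * δ o₁ o₂ +
              δ a₁ b₁ * δ a₂ b₂ * δ i₁ j₂ * δ i₂ j₁ * δ l₁ l₂)) := by
    rw [integral_unitary_mul_mul_conj_mul_conj, ← δ_mul_δ_swap l₁ l₂, ← δ_mul_δ_swap o₁ o₂]
    simp only [δ_prod, δ_self, Fintype.card_prod, Nat.cast_mul]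
    ring
  simp only [summand, Finset.sum_add_distrib, Finset.sum_sub_distrib, ← Finset.mul_sum,
    ← Finset.sum_mul, sum_sum_δ, Finset.sum_const, Finset.card_univ, nsmul_eq_mul]
  field_simp

/-- Entries of the Haar-averaged two-copy Choi–Jamiołkowski state of a
unistochastic channel (environment of dimension `d`, initialised maximally mixed). -/
theorem averaged_unistochastic_choi_t_two (d : ℕ) (hd : 2 ≤ d)
    (μ : Measure (Matrix.unitaryGroup (Fin d × Fin d) ℂ)) [μ.IsHaarMeasure]
    [IsProbabilityMeasure μ] (a₁ a₂ b₁ b₂ i₁ i₂ j₁ j₂ : Fin d) :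
    (1 / (d : ℂ) ^ 4) * ∑ l₁ : Fin d, ∑ l₂ : Fin d, ∑ o₁ : Fin d, ∑ o₂ : Fin d,
        ∫ U : Matrix.unitaryGroup (Fin d × Fin d) ℂ,
          U (i₁, l₁) (a₁, o₁) * U (i₂, l₂) (a₂, o₂) *
            (starRingEnd ℂ) (U (j₁, l₁) (b₁, o₁)) *
            (starRingEnd ℂ) (U (j₂, l₂) (b₂, o₂)) ∂μ =
      (1 / ((d : ℂ) ^ 4 - 1)) *
        (δ a₁ b₁ * δ a₂ b₂ * δ i₁ j₁ * δ i₂ j₂ +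
          (1 / (d : ℂ) ^ 2) * (δ a₁ b₂ * δ a₂ b₁ * δ i₁ j₂ * δ i₂ j₁) -
          (1 / (d : ℂ) ^ 3) *
            (δ a₁ b₂ * δ a₂ b₁ * δ i₁ j₁ * δ i₂ j₂ +
              δ a₁ b₁ * δ a₂ b₂ * δ i₁ j₂ * δ i₂ j₁)) := by
  have : Nontrivial (Fin d) := Fin.nontrivial_iff_two_le.2 hd
  have card_ne_zero : (d : ℂ) ≠ 0 := Nat.cast_ne_zero.2 (zero_lt_two.trans_le hd).ne'
  simpa only [Fintype.card_fin, ← sq, ← pow_mul, Nat.reducePow, div_self card_ne_zero, one_pow,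
    one_mul] using
    averaged_unistochastic_choi_t_two_general μ a₁ a₂ b₁ b₂ i₁ i₂ j₁ j₂
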